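/- Let (z_k)_{k≥1} be a sequence in ℂ with |z_k| > 1 for all k and Σ_k (|z_k| − 1) < ∞, let (μ_k) be positive reals with Σ_k μ_k < ∞, and let μ = m + Σ_k μ_k δ_{z_k} (i.e. weight w ≡ 1 on the circle). Then liminf_{n→∞} η_n ≥ ∏_k |z_k|^{−1}. -/

import Mathlib

open MeasureTheory Filter Finset

/-- Normalized arc-length (Haar) measure on the unit circle, viewed as a measure on `ℂ`. -/
noncomputable def haarCircle : Measure ℂ :=
  ((ENNReal.ofReal (2 * Real.pi))⁻¹ • volume.restrict (Set.Ioc (0 : ℝ) (2 * Real.pi))).map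
    (fun θ : ℝ => Complex.exp (θ * Complex.I))

/-- `η_n`: the supremum of `|c_n|` over Laurent polynomials
`R(z) = Σ_{j=-(n-1)}^{n} c_j z^j` with `∫ |R|² dμ ≤ 1`. -/
noncomputable def etaSeq (μ : Measure ℂ) (n : ℕ) : ℝ :=
  sSup { x : ℝ | ∃ c : ℤ → ℂ,
    (∫ z : ℂ, ‖∑ j ∈ Finset.Icc (-(n : ℤ) + 1) (n : ℤ), c j * z ^ j‖ ^ 2 ∂μ) ≤ 1 ∧
    x = ‖c (n : ℤ)‖ }

/-!
Let `b` be a finite Blaschke product vanishing at `1 / z_k` for `k` in a finite set `S`, let `V` be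
the average of its Taylor polynomials of lengths `n + 1, …, 2 * n` (a de la Vallée Poussin mean),
and test `η_n` with `R(z) = z ^ n * V(1 / z)`. Its top coefficient is `V(0) = b(0)`, and its energy
on the circle is at most `1`, since averaging shrinks the coefficients of `b` and `b` is bounded by
`1` on the disc. At `a = 1 / z_k` with `k ∈ S`, write `b = (a - z) * u`: the partial sums of `b` at
`a` telescope to single coefficients of `u`, and Cauchy–Schwarz bounds `|R(z_k)|²` by
`min 2 (1 / (n * (1 - |a|²)))`, uniformly in `S`. Exhausting all the points by `S` removes the
remaining masses for each fixed `n`, and dominated convergence sends the energy at the `z_k` to `0`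
as `n → ∞`, so `liminf η_n` is at least the infimum of `|b(0)| = ∏_{k ∈ S} |z_k|⁻¹`.
-/

open scoped ComplexConjugate PowerSeries Polynomial Topology

section PowerSeries

open PowerSeries

lemma one_sub_C_mul_X_mul_mk_pow {R : Type*} [CommRing R] (a : R) :
    (1 - C a * X) * PowerSeries.mk (fun j ↦ a ^ j) = 1 := by
  ext j
  cases j with
  | zero => simp [sub_mul, mul_assoc]
  | succ j => simp [sub_mul, mul_assoc, coeff_succ_X_mul, coeff_one, pow_succ']

lemma eval_trunc_C_sub_X_mul {R : Type*} [CommRing R] (a : R) (u : R⟦X⟧) (N : ℕ) :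
    (trunc (N + 1) ((C a - X) * u)).eval a = a ^ (N + 1) * coeff N u := by
  rw [Polynomial.eval, eval₂_trunc_eq_sum_range]
  induction N with
  | zero => simp [mul_comm]
  | succ N ih =>
    rw [sum_range_succ, ih]
    simp only [sub_mul, map_sub, coeff_C_mul, coeff_succ_X_mul, RingHom.id_apply]
    ring

/-- The squared `ℓ²` norm of the first `N` coefficients of a power series. -/
noncomputable def truncNormSq (N : ℕ) (f : ℂ⟦X⟧) : ℝ := ∑ j ∈ range N, ‖coeff j f‖ ^ 2

lemma truncNormSq_nonneg (N : ℕ) (f : ℂ⟦X⟧) : 0 ≤ truncNormSq N f := by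
  unfold truncNormSq; positivity

lemma sq_norm_coeff_mul_le (f g : ℂ⟦X⟧) (N : ℕ) :
    ‖coeff N (f * g)‖ ^ 2 ≤ truncNormSq (N + 1) f * truncNormSq (N + 1) g := by
  have hsum : ‖coeff N (f * g)‖ ≤ ∑ i ∈ range (N + 1), ‖coeff i f‖ * ‖coeff (N - i) g‖ := by
    rw [coeff_mul, Nat.sum_antidiagonal_eq_sum_range_succ_mk]
    exact norm_sum_le_of_le _ fun i _ ↦ norm_mul_le _ _
  calc ‖coeff N (f * g)‖ ^ 2
      ≤ (∑ i ∈ range (N + 1), ‖coeff i f‖ * ‖coeff (N - i) g‖) ^ 2 := by gcongr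
    _ ≤ truncNormSq (N + 1) f * ∑ i ∈ range (N + 1), ‖coeff (N - i) g‖ ^ 2 :=
        sum_mul_sq_le_sq_mul_sq _ _ _
    _ = truncNormSq (N + 1) f * truncNormSq (N + 1) g := by
        rw [sum_flip fun i ↦ ‖coeff i g‖ ^ 2, truncNormSq, truncNormSq]

lemma truncNormSq_mk_conj_pow_le {a : ℂ} (ha : ‖a‖ < 1) (N : ℕ) :
    truncNormSq N (PowerSeries.mk fun j ↦ conj a ^ j) ≤ min (N : ℝ) (1 - ‖a‖ ^ 2)⁻¹ := by
  have hsq : ‖a‖ ^ 2 < 1 := pow_lt_one₀ (norm_nonneg a) ha two_ne_zero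
  have hgeom : truncNormSq N (PowerSeries.mk fun j ↦ conj a ^ j) = ∑ j ∈ range N, (‖a‖ ^ 2) ^ j :=
    sum_congr rfl fun j _ ↦ by simp [pow_right_comm]
  rw [hgeom]
  refine le_min ?_ ?_
  · simpa using sum_le_card_nsmul (range N) _ 1 fun j _ ↦ pow_le_one₀ (sq_nonneg ‖a‖) hsq.le
  · rw [← tsum_geometric_of_lt_one (sq_nonneg _) hsq]
    exact (summable_geometric_of_lt_one (sq_nonneg _) hsq).sum_le_tsum _ fun _ _ ↦ by positivity

lemma truncNormSq_C_sub_X_mul (a : ℂ) (u : ℂ⟦X⟧) (N : ℕ) :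
    truncNormSq (N + 1) ((C a - X) * u) =
      truncNormSq (N + 1) ((1 - C (conj a) * X) * u) - (1 - ‖a‖ ^ 2) * ‖coeff N u‖ ^ 2 := by
  have hmoebius (p q : ℂ) :
      ‖a * q - p‖ ^ 2 = ‖q - conj a * p‖ ^ 2 - (1 - ‖a‖ ^ 2) * (‖q‖ ^ 2 - ‖p‖ ^ 2) := by
    simp only [Complex.sq_norm, Complex.normSq_apply, Complex.sub_re, Complex.sub_im,
      Complex.mul_re, Complex.mul_im, Complex.conj_re, Complex.conj_im]
    ring
  simp only [truncNormSq]
  induction N with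
  | zero => simp [sub_mul, mul_assoc]; ring
  | succ N ih =>
    rw [sum_range_succ, ih, sum_range_succ _ (N + 1)]
    simp only [sub_mul, mul_assoc, map_sub, coeff_C_mul, coeff_succ_X_mul, one_mul, hmoebius]
    ring

/-- A power series is *Schur* if multiplication by it contracts every truncated `ℓ²` norm, i.e. if
its lower triangular Toeplitz matrices are contractions. These are the Taylor series of the
holomorphic functions from the unit disc to the closed unit disc. -/
def IsSchur (b : ℂ⟦X⟧) : Prop :=
  ∀ (f : ℂ⟦X⟧) (N : ℕ), truncNormSq N (b * f) ≤ truncNormSq N f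

namespace IsSchur

lemma one : IsSchur 1 := fun f N ↦ by rw [one_mul]

lemma mul {b₁ b₂ : ℂ⟦X⟧} (h₁ : IsSchur b₁) (h₂ : IsSchur b₂) : IsSchur (b₁ * b₂) := fun f N ↦ by
  rw [mul_assoc]
  exact (h₁ _ N).trans (h₂ f N)

lemma prod {ι : Type*} {S : Finset ι} {b : ι → ℂ⟦X⟧} (hb : ∀ k ∈ S, IsSchur (b k)) :
    IsSchur (∏ k ∈ S, b k) :=
  prod_induction b IsSchur (fun _ _ ↦ mul) one hb

lemma truncNormSq_le_one {b : ℂ⟦X⟧} (hb : IsSchur b) (N : ℕ) : truncNormSq N b ≤ 1 := by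
  calc truncNormSq N b ≤ truncNormSq N 1 := by simpa using hb 1 N
    _ ≤ 1 := by cases N <;> simp [truncNormSq, sum_range_succ', coeff_one]

end IsSchur

/-- The Taylor series at `0` of the Blaschke factor `(a - z) / (1 - conj a * z)`, written without
the usual unimodular constant, so that its value at `0` is `a`. -/
noncomputable def blaschkeFactor (a : ℂ) : ℂ⟦X⟧ := (C a - X) * PowerSeries.mk fun j ↦ conj a ^ j

lemma constantCoeff_blaschkeFactor (a : ℂ) : constantCoeff (blaschkeFactor a) = a := by
  have hmk : constantCoeff (PowerSeries.mk fun j ↦ conj a ^ j) = 1 := by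
    rw [← coeff_zero_eq_constantCoeff_apply, coeff_mk, pow_zero]
  simp [blaschkeFactor, hmk]

lemma isSchur_blaschkeFactor {a : ℂ} (ha : ‖a‖ ≤ 1) : IsSchur (blaschkeFactor a) := by
  rintro f (_ | N)
  · simp [truncNormSq]
  · rw [blaschkeFactor, mul_assoc, truncNormSq_C_sub_X_mul, ← mul_assoc (1 - _),
      one_sub_C_mul_X_mul_mk_pow, one_mul]
    have hsq : ‖a‖ ^ 2 ≤ 1 := pow_le_one₀ (norm_nonneg a) ha
    exact sub_le_self _ (mul_nonneg (sub_nonneg.2 hsq) (sq_nonneg _))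

/-- The de la Vallée Poussin mean of `b`: the average of its Taylor polynomials of the `n` lengths
`n + 1, …, 2 * n`. -/
noncomputable def vallePoussin (n : ℕ) (b : ℂ⟦X⟧) : ℂ[X] :=
  (n : ℂ)⁻¹ • ∑ c ∈ range n, trunc (2 * n - c) b

lemma vallePoussin_mem_degreeLT (n : ℕ) (b : ℂ⟦X⟧) :
    vallePoussin n b ∈ Polynomial.degreeLT ℂ (2 * n) := by
  refine Submodule.smul_mem _ _ (Submodule.sum_mem _ fun c _ ↦ Polynomial.mem_degreeLT.2 ?_)
  exact (degree_trunc_lt b _).trans_le (by exact_mod_cast Nat.sub_le _ _)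

lemma coeff_zero_vallePoussin {n : ℕ} (hn : 0 < n) (b : ℂ⟦X⟧) :
    (vallePoussin n b).coeff 0 = constantCoeff b := by
  have hcoeff : ∀ c ∈ range n, (trunc (2 * n - c) b).coeff 0 = constantCoeff b := fun c hc ↦ by
    have := mem_range.1 hc
    rw [coeff_trunc, if_pos (by lia), coeff_zero_eq_constantCoeff_apply]
  rw [vallePoussin, Polynomial.coeff_smul, Polynomial.finsetSum_coeff, sum_congr rfl hcoeff]
  simp [hn.ne']

lemma norm_coeff_vallePoussin_le (n : ℕ) (b : ℂ⟦X⟧) (i : ℕ) :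
    ‖(vallePoussin n b).coeff i‖ ≤ ‖coeff i b‖ := by
  have hterm (c : ℕ) : ‖(trunc (2 * n - c) b).coeff i‖ ≤ ‖coeff i b‖ := by
    rw [coeff_trunc]; split_ifs <;> simp
  rw [vallePoussin, Polynomial.coeff_smul, Polynomial.finsetSum_coeff, norm_smul, norm_inv,
    Complex.norm_natCast]
  refine inv_mul_le_of_le_mul₀ n.cast_nonneg (norm_nonneg _) ?_
  simpa using norm_sum_le_of_le (range n) fun c _ ↦ hterm c

lemma natCast_mul_eval_vallePoussin {n : ℕ} (hn : 0 < n) (a : ℂ) (u : ℂ⟦X⟧) :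
    n * (vallePoussin n ((C a - X) * u)).eval a =
      a ^ n *
        coeff (2 * n - 1) (PowerSeries.mk (fun c ↦ if c < n then a ^ (n - c) else 0) * u) := by
  have htrunc : ∀ c ∈ range n, (trunc (2 * n - c) ((C a - X) * u)).eval a =
      a ^ n * (a ^ (n - c) * coeff (2 * n - 1 - c) u) := fun c hc ↦ by
    have hcn := mem_range.1 hc
    rw [show 2 * n - c = 2 * n - 1 - c + 1 by lia, eval_trunc_C_sub_X_mul, ← mul_assoc, ← pow_add]
    congr 2
    lia
  have hconv : coeff (2 * n - 1) (PowerSeries.mk (fun c ↦ if c < n then a ^ (n - c) else 0) * u) =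
      ∑ c ∈ range n, a ^ (n - c) * coeff (2 * n - 1 - c) u := by
    rw [coeff_mul, Nat.sum_antidiagonal_eq_sum_range_succ_mk]
    simp only [coeff_mk, ite_mul, zero_mul]
    rw [← sum_filter]
    congr 1
    ext c
    simp only [mem_filter, mem_range]
    lia
  rw [vallePoussin, Polynomial.eval_smul, Polynomial.eval_finsetSum, smul_eq_mul,
    mul_inv_cancel_left₀ (by exact_mod_cast hn.ne'), sum_congr rfl htrunc, ← mul_sum, hconv]

lemma truncNormSq_mk_pow_sub_le {a : ℂ} (ha : ‖a‖ ≤ 1) (n N : ℕ) :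
    truncNormSq N (PowerSeries.mk fun c ↦ if c < n then a ^ (n - c) else 0) ≤ n := by
  calc truncNormSq N (PowerSeries.mk fun c ↦ if c < n then a ^ (n - c) else 0)
      ≤ ∑ c ∈ range N, if c < n then (1 : ℝ) else 0 := by
        refine sum_le_sum fun c _ ↦ ?_
        rw [coeff_mk]
        split_ifs
        · rw [norm_pow]
          exact pow_le_one₀ (by positivity) (pow_le_one₀ (norm_nonneg a) ha)
        · simp
    _ ≤ n := by
        rw [sum_boole]
        exact_mod_cast (card_le_card fun c ↦ by simp).trans_eq (card_range n)

-- The mean is a single coefficient of a product, so Cauchy–Schwarz gains the factor `1 / n`.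
lemma sq_norm_eval_vallePoussin_le {n : ℕ} (hn : 0 < n) {a : ℂ} (ha : ‖a‖ < 1) {b : ℂ⟦X⟧}
    (hb : IsSchur b) :
    ‖(vallePoussin n (blaschkeFactor a * b)).eval a‖ ^ 2 ≤
      ‖a‖ ^ (2 * n) * min 2 (n * (1 - ‖a‖ ^ 2))⁻¹ := by
  set g : ℂ⟦X⟧ := PowerSeries.mk fun j ↦ conj a ^ j
  set x : ℂ⟦X⟧ := PowerSeries.mk fun c ↦ if c < n then a ^ (n - c) else 0
  have hn0 : (0 : ℝ) < n := by exact_mod_cast hn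
  have heval : n * (vallePoussin n (blaschkeFactor a * b)).eval a =
      a ^ n * coeff (2 * n - 1) (g * (b * x)) := by
    rw [blaschkeFactor, mul_assoc, natCast_mul_eval_vallePoussin hn, mul_comm b x,
      mul_left_comm x]
  have hcoeff : ‖coeff (2 * n - 1) (g * (b * x))‖ ^ 2 ≤
      min ((2 * n : ℕ) : ℝ) (1 - ‖a‖ ^ 2)⁻¹ * n := by
    refine (sq_norm_coeff_mul_le _ _ _).trans ?_
    rw [Nat.sub_add_cancel (by lia)]
    exact mul_le_mul (truncNormSq_mk_conj_pow_le ha _)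
      ((hb x _).trans (truncNormSq_mk_pow_sub_le ha.le _ _)) (truncNormSq_nonneg _ _)
      ((truncNormSq_nonneg _ _).trans (truncNormSq_mk_conj_pow_le ha (2 * n)))
  have hmin : min ((2 * n : ℕ) : ℝ) (1 - ‖a‖ ^ 2)⁻¹ = n * min 2 (n * (1 - ‖a‖ ^ 2))⁻¹ := by
    rw [mul_min_of_nonneg _ _ hn0.le, mul_inv, mul_inv_cancel_left₀ hn0.ne']
    push_cast
    rw [mul_comm]
  refine le_of_mul_le_mul_left ?_ (pow_pos hn0 2)
  calc (n : ℝ) ^ 2 * ‖(vallePoussin n (blaschkeFactor a * b)).eval a‖ ^ 2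
      = ‖a‖ ^ (2 * n) * ‖coeff (2 * n - 1) (g * (b * x))‖ ^ 2 := by
        rw [← Complex.norm_natCast, ← mul_pow, ← norm_mul, heval, norm_mul, norm_pow, mul_pow,
          ← pow_mul, mul_comm n]
    _ ≤ ‖a‖ ^ (2 * n) * (min ((2 * n : ℕ) : ℝ) (1 - ‖a‖ ^ 2)⁻¹ * n) := by gcongr
    _ = (n : ℝ) ^ 2 * (‖a‖ ^ (2 * n) * min 2 (n * (1 - ‖a‖ ^ 2))⁻¹) := by rw [hmin]; ring

end PowerSeries

section Polynomial

open Polynomial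

/-- The squared `ℓ²` norm of the coefficients of a polynomial. -/
noncomputable def coeffNormSq (P : ℂ[X]) : ℝ := ∑ i ∈ P.support, ‖P.coeff i‖ ^ 2

lemma coeffNormSq_nonneg (P : ℂ[X]) : 0 ≤ coeffNormSq P := sum_nonneg fun _ _ ↦ sq_nonneg _

lemma sq_norm_coeff_le_coeffNormSq (P : ℂ[X]) (i : ℕ) : ‖P.coeff i‖ ^ 2 ≤ coeffNormSq P := by
  by_cases hi : i ∈ P.support
  · exact single_le_sum (f := fun i ↦ ‖P.coeff i‖ ^ 2) (fun _ _ ↦ sq_nonneg _) hi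
  · rw [notMem_support_iff.1 hi, norm_zero, zero_pow two_ne_zero]
    exact coeffNormSq_nonneg P

lemma support_subset_range_of_mem_degreeLT {R : Type*} [Semiring R] {P : R[X]} {N : ℕ}
    (hP : P ∈ degreeLT R N) : P.support ⊆ range N := fun i hi ↦ by
  rw [mem_range]
  exact_mod_cast (le_degree_of_mem_supp i hi).trans_lt (mem_degreeLT.1 hP)

lemma sq_norm_eval_le_card_support_mul (P : ℂ[X]) {w : ℂ} (hw : ‖w‖ ≤ 1) :
    ‖P.eval w‖ ^ 2 ≤ #P.support * coeffNormSq P := by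
  have hnorm : ‖P.eval w‖ ≤ ∑ i ∈ P.support, ‖P.coeff i‖ := by
    rw [eval_eq_sum, Polynomial.sum]
    refine norm_sum_le_of_le _ fun i _ ↦ ?_
    rw [norm_mul, norm_pow]
    exact mul_le_of_le_one_right (norm_nonneg _) (pow_le_one₀ (norm_nonneg w) hw)
  calc ‖P.eval w‖ ^ 2 ≤ (∑ i ∈ P.support, ‖P.coeff i‖) ^ 2 := by gcongr
    _ ≤ #P.support * coeffNormSq P := sq_sum_le_card_mul_sum_sq

lemma coeffNormSq_vallePoussin_le_one (n : ℕ) {b : ℂ⟦X⟧} (hb : IsSchur b) :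
    coeffNormSq (vallePoussin n b) ≤ 1 := by
  calc coeffNormSq (vallePoussin n b)
      ≤ ∑ i ∈ range (2 * n), ‖(vallePoussin n b).coeff i‖ ^ 2 :=
        sum_le_sum_of_subset_of_nonneg
          (support_subset_range_of_mem_degreeLT (vallePoussin_mem_degreeLT n b))
          fun _ _ _ ↦ sq_nonneg _
    _ ≤ truncNormSq (2 * n) b := sum_le_sum fun i _ ↦ by
        gcongr
        exact norm_coeff_vallePoussin_le n b i
    _ ≤ 1 := hb.truncNormSq_le_one _

end Polynomial

instance : IsFiniteMeasure haarCircle := by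
  have : IsFiniteMeasure ((ENNReal.ofReal (2 * Real.pi))⁻¹ •
      volume.restrict (Set.Ioc (0 : ℝ) (2 * Real.pi))) :=
    Measure.smul_finite _ (by simp [Real.pi_pos])
  unfold haarCircle
  infer_instance

lemma ae_norm_eq_one_haarCircle : ∀ᵐ x ∂haarCircle, ‖x‖ = 1 := by
  refine (ae_map_iff (by fun_prop) (measurableSet_eq_fun measurable_norm measurable_const)).2 ?_
  exact ae_of_all _ Complex.norm_exp_ofReal_mul_I

lemma integral_haarCircle {E : Type*} [NormedAddCommGroup E] [NormedSpace ℝ E] {f : ℂ → E}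
    (hf : AEStronglyMeasurable f haarCircle) :
    ∫ x, f x ∂haarCircle = Real.circleAverage f 0 1 := by
  rw [haarCircle, integral_map (by fun_prop) hf, integral_smul_measure, Real.circleAverage,
    intervalIntegral.integral_of_le Real.two_pi_pos.le, ENNReal.toReal_inv,
    ENNReal.toReal_ofReal Real.two_pi_pos.le]
  simp only [circleMap, zero_add, Complex.ofReal_one, one_mul]

section Laurent

open Polynomial

/-- The Laurent polynomial `∑ j, c_j * x ^ j` with `c_j = P.coeff (n - j)`, for a polynomial `P`.
Its top coefficient `c_n` is `P.coeff 0`, and `P ∈ degreeLT ℂ (2 * n)` encodes `-n < j ≤ n`. -/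
noncomputable def laurentEval (n : ℕ) (P : ℂ[X]) (x : ℂ) : ℂ := x ^ n * P.eval x⁻¹

lemma measurable_laurentEval (n : ℕ) (P : ℂ[X]) : Measurable (laurentEval n P) :=
  (measurable_id.pow_const n).mul (P.continuous.measurable.comp measurable_inv)

lemma sq_norm_laurentEval_le (n : ℕ) (P : ℂ[X]) {x : ℂ} (hx : 1 ≤ ‖x‖) :
    ‖laurentEval n P x‖ ^ 2 ≤ ‖x‖ ^ (2 * n) * (#P.support * coeffNormSq P) := by
  rw [laurentEval, norm_mul, norm_pow, mul_pow, ← pow_mul, mul_comm n]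
  gcongr
  exact sq_norm_eval_le_card_support_mul P (by rw [norm_inv]; exact inv_le_one_of_one_le₀ hx)

lemma sum_Icc_eq_laurentEval {n : ℕ} {P : ℂ[X]} (hP : P ∈ degreeLT ℂ (2 * n)) {c : ℤ → ℂ}
    (hc : ∀ i < 2 * n, c (n - i) = P.coeff i) {x : ℂ} (hx : x ≠ 0) :
    ∑ j ∈ Icc (-(n : ℤ) + 1) n, c j * x ^ j = laurentEval n P x := by
  rw [laurentEval, eval_eq_sum, Polynomial.sum, mul_sum,
    sum_subset (support_subset_range_of_mem_degreeLT hP) fun i _ hi ↦ by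
      rw [notMem_support_iff.1 hi, zero_mul, mul_zero]]
  refine (sum_nbij' (fun i : ℕ ↦ (n : ℤ) - i) (fun j ↦ (n - j).toNat) ?_ ?_ ?_ ?_ ?_).symm
  · simp only [mem_range, mem_Icc]
    lia
  · simp only [mem_range, mem_Icc]
    lia
  · lia
  · simp only [mem_Icc]
    lia
  · intro i hi
    rw [hc i (mem_range.1 hi), zpow_sub₀ hx, zpow_natCast, zpow_natCast, inv_pow, div_eq_mul_inv]
    ring

/-- The energy `∫ |R|² dμ` of the Laurent polynomial `R = laurentEval n P`. -/
noncomputable def laurentEnergy (μ : Measure ℂ) (n : ℕ) (P : ℂ[X]) : ℝ :=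
  ∫ x, ‖laurentEval n P x‖ ^ 2 ∂μ

lemma laurentEnergy_nonneg (μ : Measure ℂ) (n : ℕ) (P : ℂ[X]) : 0 ≤ laurentEnergy μ n P :=
  integral_nonneg fun _ ↦ sq_nonneg _

lemma laurentEnergy_C_mul (μ : Measure ℂ) (n : ℕ) (a : ℂ) (P : ℂ[X]) :
    laurentEnergy μ n (C a * P) = ‖a‖ ^ 2 * laurentEnergy μ n P := by
  rw [laurentEnergy, laurentEnergy, ← integral_const_mul]
  congr with x
  simp only [laurentEval, eval_mul, eval_C, norm_mul]
  ring

lemma etaSeq_eq_sSup {μ : Measure ℂ} (hμ : ∀ᵐ x ∂μ, x ≠ 0) {n : ℕ} (hn : 0 < n) :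
    etaSeq μ n =
      sSup {r | ∃ P ∈ degreeLT ℂ (2 * n), laurentEnergy μ n P ≤ 1 ∧ r = ‖P.coeff 0‖} := by
  have henergy {P : ℂ[X]} (hP : P ∈ degreeLT ℂ (2 * n)) {c : ℤ → ℂ}
      (hc : ∀ i < 2 * n, c (n - i) = P.coeff i) :
      ∫ x, ‖∑ j ∈ Icc (-(n : ℤ) + 1) n, c j * x ^ j‖ ^ 2 ∂μ = laurentEnergy μ n P :=
    integral_congr_ae <| hμ.mono fun x hx ↦ by simp only [sum_Icc_eq_laurentEval hP hc hx]
  rw [etaSeq]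
  congr 1
  ext r
  constructor
  · rintro ⟨c, hle, rfl⟩
    let P : ℂ[X] := ∑ i ∈ range (2 * n), monomial i (c (n - i))
    have hP : P ∈ degreeLT ℂ (2 * n) := Submodule.sum_mem _ fun i hi ↦
      mem_degreeLT.2 ((degree_monomial_le _ _).trans_lt (by exact_mod_cast mem_range.1 hi))
    have hc : ∀ i < 2 * n, c (n - i) = P.coeff i := fun i hi ↦ by
      simp [P, finsetSum_coeff, coeff_monomial, hi]
    exact ⟨P, hP, (henergy hP hc).symm.trans_le hle, by simp [← hc 0 (by lia)]⟩
  · rintro ⟨P, hP, hle, rfl⟩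
    refine ⟨fun j ↦ P.coeff (n - j).toNat, ?_, by simp⟩
    rwa [henergy hP fun i _ ↦ by simp]

lemma laurentEnergy_haarCircle (n : ℕ) (P : ℂ[X]) :
    laurentEnergy haarCircle n P = coeffNormSq P := by
  have hcircle : ∫ x, ‖laurentEval n P x‖ ^ 2 ∂haarCircle = ∫ x, ‖P.eval x⁻¹‖ ^ 2 ∂haarCircle :=
    integral_congr_ae <| ae_norm_eq_one_haarCircle.mono fun x hx ↦ by
      simp only [laurentEval, norm_mul, norm_pow, hx, one_pow, one_mul]
  rw [laurentEnergy, hcircle, integral_haarCircle (by fun_prop), coeffNormSq,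
    sum_sq_norm_coeff_eq_circleAverage,
    Real.circleAverage_zero_one_congr_inv (f := fun x ↦ ‖P.eval x‖ ^ 2)]

lemma integrable_sq_norm_laurentEval_haarCircle (n : ℕ) (P : ℂ[X]) :
    Integrable (fun x ↦ ‖laurentEval n P x‖ ^ 2) haarCircle := by
  refine Integrable.of_bound ((measurable_laurentEval n P).norm.pow_const 2).aestronglyMeasurable
    (#P.support * coeffNormSq P) (ae_norm_eq_one_haarCircle.mono fun x hx ↦ ?_)
  simpa [hx] using sq_norm_laurentEval_le n P hx.ge

end Laurent

section CircleWithMasses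

open Polynomial

/-- The measure `m + ∑ₖ μₖ δ_{zₖ}`, where `m` is the Haar measure of the unit circle. -/
noncomputable def circleWithMasses {ι : Type*} (z : ι → ℂ) (μk : ι → ℝ) : Measure ℂ :=
  haarCircle + Measure.sum fun k ↦ ENNReal.ofReal (μk k) • Measure.dirac (z k)

variable {ι : Type*} {z : ι → ℂ} {μk : ι → ℝ}

lemma ae_ne_zero_circleWithMasses [Countable ι] (hz : ∀ k, z k ≠ 0) :
    ∀ᵐ x ∂circleWithMasses z μk, x ≠ 0 := by
  refine ae_add_measure_iff.2 ⟨?_, Measure.ae_sum_iff.2 fun k ↦ ?_⟩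
  · exact ae_norm_eq_one_haarCircle.mono fun x hx ↦ norm_ne_zero_iff.1 (by simp [hx])
  · exact Measure.ae_smul_measure ((ae_dirac_iff (measurableSet_singleton 0).compl).2 (hz k)) _

lemma summable_mul_sq_norm_laurentEval (hz : ∀ k, 1 ≤ ‖z k‖) (hμk : ∀ k, 0 ≤ μk k)
    (hmom : ∀ N : ℕ, Summable fun k ↦ μk k * ‖z k‖ ^ N) (n : ℕ) (P : ℂ[X]) :
    Summable fun k ↦ μk k * ‖laurentEval n P (z k)‖ ^ 2 := by
  refine ((hmom (2 * n)).mul_right (#P.support * coeffNormSq P)).of_nonneg_of_le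
    (fun k ↦ mul_nonneg (hμk k) (sq_nonneg _)) fun k ↦ ?_
  rw [mul_assoc]
  exact mul_le_mul_of_nonneg_left (sq_norm_laurentEval_le n P (hz k)) (hμk k)

lemma laurentEnergy_circleWithMasses [Countable ι] (hz : ∀ k, 1 ≤ ‖z k‖)
    (hμk : ∀ k, 0 ≤ μk k) (hmom : ∀ N : ℕ, Summable fun k ↦ μk k * ‖z k‖ ^ N) (n : ℕ) (P : ℂ[X]) :
    laurentEnergy (circleWithMasses z μk) n P =
      coeffNormSq P + ∑' k, μk k * ‖laurentEval n P (z k)‖ ^ 2 := by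
  have hmass (k : ι) : ENNReal.ofReal (μk k) ≠ ⊤ := ENNReal.ofReal_ne_top
  have hmasses : Summable fun k ↦
      (ENNReal.ofReal (μk k)).toReal * ‖‖laurentEval n P (z k)‖ ^ 2‖ := by
    simpa [ENNReal.toReal_ofReal (hμk _)] using summable_mul_sq_norm_laurentEval hz hμk hmom n P
  rw [← laurentEnergy_haarCircle n, laurentEnergy, laurentEnergy, circleWithMasses,
    integral_add_measure (integrable_sq_norm_laurentEval_haarCircle n P)
      (integrable_sum_dirac hmass hmasses), integral_sum_dirac hmass]
  simp only [ENNReal.toReal_ofReal (hμk _), smul_eq_mul]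

lemma coeffNormSq_le_laurentEnergy_circleWithMasses [Countable ι] (hz : ∀ k, 1 ≤ ‖z k‖)
    (hμk : ∀ k, 0 ≤ μk k) (hmom : ∀ N : ℕ, Summable fun k ↦ μk k * ‖z k‖ ^ N) (n : ℕ) (P : ℂ[X]) :
    coeffNormSq P ≤ laurentEnergy (circleWithMasses z μk) n P := by
  rw [laurentEnergy_circleWithMasses hz hμk hmom]
  exact le_add_of_nonneg_right (tsum_nonneg fun k ↦ mul_nonneg (hμk k) (sq_nonneg _))

end CircleWithMasses

section EtaSeq

open Polynomial

variable {μ : Measure ℂ} {n : ℕ}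

lemma etaSeq_nonneg (μ : Measure ℂ) (n : ℕ) : 0 ≤ etaSeq μ n := by
  refine Real.sSup_nonneg ?_
  rintro _ ⟨c, -, rfl⟩
  exact norm_nonneg _

lemma norm_coeff_zero_le_one (hμ : ∀ P, coeffNormSq P ≤ laurentEnergy μ n P) {P : ℂ[X]}
    (hP : laurentEnergy μ n P ≤ 1) : ‖P.coeff 0‖ ≤ 1 :=
  (sq_le_one_iff₀ (norm_nonneg _)).1
    ((sq_norm_coeff_le_coeffNormSq P 0).trans ((hμ P).trans hP))

lemma etaSeq_le_one (hμ₀ : ∀ᵐ x ∂μ, x ≠ 0) (hμ : ∀ P, coeffNormSq P ≤ laurentEnergy μ n P)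
    (hn : 0 < n) : etaSeq μ n ≤ 1 := by
  rw [etaSeq_eq_sSup hμ₀ hn]
  refine Real.sSup_le ?_ zero_le_one
  rintro _ ⟨P, -, hP, rfl⟩
  exact norm_coeff_zero_le_one hμ hP

lemma sq_norm_coeff_zero_le (hμ₀ : ∀ᵐ x ∂μ, x ≠ 0)
    (hμ : ∀ P, coeffNormSq P ≤ laurentEnergy μ n P) (hn : 0 < n) {P : ℂ[X]}
    (hP : P ∈ degreeLT ℂ (2 * n)) :
    ‖P.coeff 0‖ ^ 2 ≤ etaSeq μ n ^ 2 * laurentEnergy μ n P := by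
  obtain hE | hE := (laurentEnergy_nonneg μ n P).eq_or_lt
  · rw [← hE, mul_zero, hE]
    exact (sq_norm_coeff_le_coeffNormSq P 0).trans (hμ P)
  set E := laurentEnergy μ n P
  set s : ℝ := (√E)⁻¹
  have hs : ‖(s : ℂ)‖ ^ 2 * E = 1 := by
    rw [Complex.norm_real, norm_inv, Real.norm_of_nonneg E.sqrt_nonneg, inv_pow, Real.sq_sqrt hE.le,
      inv_mul_cancel₀ hE.ne']
  have hle : ‖(C (s : ℂ) * P).coeff 0‖ ≤ etaSeq μ n := by
    rw [etaSeq_eq_sSup hμ₀ hn]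
    refine le_csSup ⟨1, ?_⟩ ⟨_, ?_, ?_, rfl⟩
    · rintro _ ⟨Q, -, hQ, rfl⟩
      exact norm_coeff_zero_le_one hμ hQ
    · rw [← smul_eq_C_mul]
      exact Submodule.smul_mem _ _ hP
    · rw [laurentEnergy_C_mul, hs]
  calc ‖P.coeff 0‖ ^ 2 = ‖(C (s : ℂ) * P).coeff 0‖ ^ 2 * E := by
        rw [coeff_C_mul, norm_mul, mul_pow, mul_right_comm, hs, one_mul]
    _ ≤ etaSeq μ n ^ 2 * E := by gcongr

end EtaSeq

section Estimates

lemma tprod_le_prod_of_le_one {ι : Type*} {f : ι → ℝ} (hf₀ : ∀ k, 0 ≤ f k) (hf₁ : ∀ k, f k ≤ 1)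
    (S : Finset ι) : ∏' k, f k ≤ ∏ k ∈ S, f k := by
  have hanti : Antitone fun S : Finset ι ↦ ∏ k ∈ S, f k := prod_anti_set_of_le_one hf₀ hf₁
  have hbdd : BddBelow (Set.range fun S : Finset ι ↦ ∏ k ∈ S, f k) :=
    ⟨0, Set.forall_mem_range.2 fun S ↦ prod_nonneg fun k _ ↦ hf₀ k⟩
  have hprod : HasProd f (⨅ S : Finset ι, ∏ k ∈ S, f k) := tendsto_atTop_ciInf hanti hbdd
  rw [hprod.tprod_eq]
  exact ciInf_le hbdd S

/-- A bound for the energy which a unit mass at a point `x` outside the closed disc contributes to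
the de la Vallée Poussin mean of index `n` of a Blaschke product vanishing at `x⁻¹`. -/
noncomputable def massBound (n : ℕ) (x : ℂ) : ℝ := min 2 (n * (1 - ‖x⁻¹‖ ^ 2))⁻¹

lemma sq_norm_laurentEval_vallePoussin_le {n : ℕ} (hn : 0 < n) {x : ℂ} (hx : 1 < ‖x‖) {b : ℂ⟦X⟧}
    (hb : IsSchur b) :
    ‖laurentEval n (vallePoussin n (blaschkeFactor x⁻¹ * b)) x‖ ^ 2 ≤ massBound n x := by
  have hx0 : x ≠ 0 := norm_pos_iff.1 (zero_lt_one.trans hx)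
  have hinv : ‖x⁻¹‖ < 1 := by rw [norm_inv]; exact inv_lt_one_of_one_lt₀ hx
  calc ‖laurentEval n (vallePoussin n (blaschkeFactor x⁻¹ * b)) x‖ ^ 2
      = ‖x‖ ^ (2 * n) * ‖(vallePoussin n (blaschkeFactor x⁻¹ * b)).eval x⁻¹‖ ^ 2 := by
        rw [laurentEval, norm_mul, norm_pow, mul_pow, ← pow_mul, mul_comm n]
    _ ≤ ‖x‖ ^ (2 * n) * (‖x⁻¹‖ ^ (2 * n) * min 2 (n * (1 - ‖x⁻¹‖ ^ 2))⁻¹) := by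
        gcongr
        exact sq_norm_eval_vallePoussin_le hn hinv hb
    _ = massBound n x := by
        rw [massBound, ← mul_assoc, ← mul_pow, ← norm_mul, mul_inv_cancel₀ hx0,
          norm_one, one_pow, one_mul]

lemma sq_norm_laurentEval_vallePoussin_le_of_isSchur (n : ℕ) {x : ℂ} (hx : 1 ≤ ‖x‖) {b : ℂ⟦X⟧}
    (hb : IsSchur b) : ‖laurentEval n (vallePoussin n b) x‖ ^ 2 ≤ 2 * n * ‖x‖ ^ (2 * n) := by
  have hcard : #(vallePoussin n b).support ≤ 2 * n :=
    (card_le_card (support_subset_range_of_mem_degreeLT (vallePoussin_mem_degreeLT n b))).trans_eq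
      (card_range _)
  calc ‖laurentEval n (vallePoussin n b) x‖ ^ 2
      ≤ ‖x‖ ^ (2 * n) *
          (#(vallePoussin n b).support * coeffNormSq (vallePoussin n b)) :=
        sq_norm_laurentEval_le n _ hx
    _ ≤ ‖x‖ ^ (2 * n) * ((2 * n : ℕ) * 1) := by
        gcongr
        exacts [coeffNormSq_nonneg _, coeffNormSq_vallePoussin_le_one n hb]
    _ = 2 * n * ‖x‖ ^ (2 * n) := by push_cast; ring

lemma one_sub_sq_norm_inv_pos {x : ℂ} (hx : 1 < ‖x‖) : 0 < 1 - ‖x⁻¹‖ ^ 2 := by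
  rw [norm_inv, sub_pos]
  exact pow_lt_one₀ (by positivity) (inv_lt_one_of_one_lt₀ hx) two_ne_zero

lemma massBound_nonneg (n : ℕ) {x : ℂ} (hx : 1 < ‖x‖) : 0 ≤ massBound n x :=
  le_min zero_le_two (inv_nonneg.2 (mul_nonneg n.cast_nonneg (one_sub_sq_norm_inv_pos hx).le))

lemma tendsto_massBound {x : ℂ} (hx : 1 < ‖x‖) :
    Tendsto (fun n ↦ massBound n x) atTop (𝓝 0) := by
  have hinv : Tendsto (fun n : ℕ ↦ (n * (1 - ‖x⁻¹‖ ^ 2))⁻¹) atTop (𝓝 0) :=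
    (tendsto_natCast_atTop_atTop.atTop_mul_const (one_sub_sq_norm_inv_pos hx)).inv_tendsto_atTop
  rw [← min_eq_right (zero_le_two (α := ℝ))]
  exact tendsto_const_nhds.min hinv

/-- The finite Blaschke product with zeros `(z k)⁻¹` for `k ∈ S`, as a power series. Conjugating its
coefficients moves the zeros to the points `1 / conj (z k)` of the usual normalization. -/
noncomputable def blaschkeProduct {ι : Type*} (z : ι → ℂ) (S : Finset ι) : ℂ⟦X⟧ :=
  ∏ k ∈ S, blaschkeFactor (z k)⁻¹

/-- A bound, uniform over the finite Blaschke products, for the energy which the masses at their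
zeros contribute to their de la Vallée Poussin means of index `n`. -/
noncomputable def residualEnergy {ι : Type*} (z : ι → ℂ) (μk : ι → ℝ) (n : ℕ) : ℝ :=
  ∑' k, μk k * massBound n (z k)

variable {ι : Type*} {z : ι → ℂ} {μk : ι → ℝ}

lemma isSchur_blaschkeProduct (hz : ∀ k, 1 ≤ ‖z k‖) (S : Finset ι) :
    IsSchur (blaschkeProduct z S) :=
  IsSchur.prod fun k _ ↦ isSchur_blaschkeFactor <| by
    rw [norm_inv]; exact inv_le_one_of_one_le₀ (hz k)

lemma norm_constantCoeff_blaschkeProduct (z : ι → ℂ) (S : Finset ι) :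
    ‖(blaschkeProduct z S).constantCoeff‖ = ∏ k ∈ S, ‖z k‖⁻¹ := by
  simp only [blaschkeProduct, map_prod, constantCoeff_blaschkeFactor, norm_prod, norm_inv]

lemma summable_mul_massBound (hz : ∀ k, 1 < ‖z k‖) (hμk : ∀ k, 0 ≤ μk k) (hμs : Summable μk)
    (n : ℕ) : Summable fun k ↦ μk k * massBound n (z k) :=
  (hμs.mul_right 2).of_nonneg_of_le (fun k ↦ mul_nonneg (hμk k) (massBound_nonneg n (hz k)))
    fun k ↦ mul_le_mul_of_nonneg_left (min_le_left _ _) (hμk k)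

lemma residualEnergy_nonneg (hz : ∀ k, 1 < ‖z k‖) (hμk : ∀ k, 0 ≤ μk k) (n : ℕ) :
    0 ≤ residualEnergy z μk n :=
  tsum_nonneg fun k ↦ mul_nonneg (hμk k) (massBound_nonneg n (hz k))

lemma tendsto_residualEnergy (hz : ∀ k, 1 < ‖z k‖) (hμk : ∀ k, 0 ≤ μk k) (hμs : Summable μk) :
    Tendsto (residualEnergy z μk) atTop (𝓝 0) := by
  have hterm (k : ι) : Tendsto (fun n ↦ μk k * massBound n (z k)) atTop (𝓝 0) := by
    simpa using (tendsto_massBound (hz k)).const_mul (μk k)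
  rw [← tsum_zero (α := ℝ) (β := ι)]
  refine tendsto_tsum_of_dominated_convergence (hμs.mul_right 2) hterm
    (Eventually.of_forall fun n k ↦ ?_)
  rw [Real.norm_of_nonneg (mul_nonneg (hμk k) (massBound_nonneg n (hz k)))]
  exact mul_le_mul_of_nonneg_left (min_le_left _ _) (hμk k)

lemma sq_norm_laurentEval_blaschkeProduct_le (hz : ∀ k, 1 < ‖z k‖) {n : ℕ} (hn : 0 < n)
    {S : Finset ι} {k : ι} (hk : k ∈ S) :
    ‖laurentEval n (vallePoussin n (blaschkeProduct z S)) (z k)‖ ^ 2 ≤ massBound n (z k) := by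
  classical
  rw [blaschkeProduct, ← mul_prod_erase S _ hk]
  exact sq_norm_laurentEval_vallePoussin_le hn (hz k)
    (isSchur_blaschkeProduct (fun j ↦ (hz j).le) (S.erase k))

lemma laurentEnergy_vallePoussin_blaschkeProduct_le [Countable ι] (hz : ∀ k, 1 < ‖z k‖)
    (hμk : ∀ k, 0 ≤ μk k) (hmom : ∀ N : ℕ, Summable fun k ↦ μk k * ‖z k‖ ^ N) {n : ℕ}
    (hn : 0 < n) (S : Finset ι) :
    laurentEnergy (circleWithMasses z μk) n (vallePoussin n (blaschkeProduct z S)) ≤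
      1 + residualEnergy z μk n + 2 * n * ∑' k : {k // k ∉ S}, μk k * ‖z k‖ ^ (2 * n) := by
  have hz' : ∀ k, 1 ≤ ‖z k‖ := fun k ↦ (hz k).le
  have hb : IsSchur (blaschkeProduct z S) := isSchur_blaschkeProduct hz' S
  set V := vallePoussin n (blaschkeProduct z S)
  have hμs : Summable μk := by simpa using hmom 0
  have hsum : Summable fun k ↦ μk k * ‖laurentEval n V (z k)‖ ^ 2 :=
    summable_mul_sq_norm_laurentEval hz' hμk hmom n V
  have hzeros : ∑ k ∈ S, μk k * ‖laurentEval n V (z k)‖ ^ 2 ≤ residualEnergy z μk n :=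
    (sum_le_sum fun k hk ↦ mul_le_mul_of_nonneg_left
      (sq_norm_laurentEval_blaschkeProduct_le hz hn hk) (hμk k)).trans
    ((summable_mul_massBound hz hμk hμs n).sum_le_tsum S
      fun k _ ↦ mul_nonneg (hμk k) (massBound_nonneg n (hz k)))
  have htail : ∑' k : {k // k ∉ S}, μk k * ‖laurentEval n V (z k)‖ ^ 2 ≤
      2 * n * ∑' k : {k // k ∉ S}, μk k * ‖z k‖ ^ (2 * n) := by
    rw [← tsum_mul_left]
    refine (hsum.subtype _).tsum_le_tsum (fun k ↦ ?_) (((hmom (2 * n)).subtype _).mul_left _)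
    rw [mul_left_comm]
    exact mul_le_mul_of_nonneg_left (sq_norm_laurentEval_vallePoussin_le_of_isSchur n (hz' k) hb)
      (hμk k)
  rw [laurentEnergy_circleWithMasses hz' hμk hmom, ← hsum.sum_add_tsum_subtype_compl S, ← add_assoc]
  gcongr
  exact coeffNormSq_vallePoussin_le_one n hb

lemma sq_tprod_norm_inv_le [Countable ι] (hz : ∀ k, 1 < ‖z k‖) (hμk : ∀ k, 0 ≤ μk k)
    (hmom : ∀ N : ℕ, Summable fun k ↦ μk k * ‖z k‖ ^ N) {n : ℕ} (hn : 0 < n) :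
    (∏' k, ‖z k‖⁻¹) ^ 2 ≤
      etaSeq (circleWithMasses z μk) n ^ 2 * (1 + residualEnergy z μk n) := by
  have hz' : ∀ k, 1 ≤ ‖z k‖ := fun k ↦ (hz k).le
  set η := etaSeq (circleWithMasses z μk) n
  have hbound (S : Finset ι) : (∏' k, ‖z k‖⁻¹) ^ 2 ≤ η ^ 2 *
      (1 + residualEnergy z μk n + 2 * n * ∑' k : {k // k ∉ S}, μk k * ‖z k‖ ^ (2 * n)) := by
    calc (∏' k, ‖z k‖⁻¹) ^ 2 ≤ (∏ k ∈ S, ‖z k‖⁻¹) ^ 2 := by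
          gcongr
          · exact tprod_nonneg fun k ↦ inv_nonneg.2 (norm_nonneg _)
          · exact tprod_le_prod_of_le_one (fun k ↦ inv_nonneg.2 (norm_nonneg _))
              (fun k ↦ inv_le_one_of_one_le₀ (hz' k)) S
      _ = ‖(vallePoussin n (blaschkeProduct z S)).coeff 0‖ ^ 2 := by
          rw [coeff_zero_vallePoussin hn, norm_constantCoeff_blaschkeProduct]
      _ ≤ η ^ 2 * laurentEnergy (circleWithMasses z μk) n (vallePoussin n (blaschkeProduct z S)) :=
          sq_norm_coeff_zero_le
            (ae_ne_zero_circleWithMasses fun k ↦ norm_pos_iff.1 (zero_lt_one.trans (hz k)))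
            (coeffNormSq_le_laurentEnergy_circleWithMasses hz' hμk hmom n) hn
            (vallePoussin_mem_degreeLT n _)
      _ ≤ _ := by
          gcongr
          exact laurentEnergy_vallePoussin_blaschkeProduct_le hz hμk hmom hn S
  have htail := tendsto_tsum_compl_atTop_zero fun k ↦ μk k * ‖z k‖ ^ (2 * n)
  have hlim := ((htail.const_mul (2 * n : ℝ)).const_add
    (1 + residualEnergy z μk n)).const_mul (η ^ 2)
  rw [mul_zero, add_zero] at hlim
  exact ge_of_tendsto' hlim hbound

lemma tprod_norm_inv_div_sqrt_le_etaSeq [Countable ι] (hz : ∀ k, 1 < ‖z k‖) (hμk : ∀ k, 0 ≤ μk k)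
    (hmom : ∀ N : ℕ, Summable fun k ↦ μk k * ‖z k‖ ^ N) {n : ℕ} (hn : 0 < n) :
    (∏' k, ‖z k‖⁻¹) / √(1 + residualEnergy z μk n) ≤ etaSeq (circleWithMasses z μk) n := by
  have hpos : 0 < 1 + residualEnergy z μk n := by linarith [residualEnergy_nonneg hz hμk n]
  rw [div_le_iff₀ (Real.sqrt_pos.2 hpos)]
  refine le_of_abs_le (abs_le_of_sq_le_sq ?_ (mul_nonneg (etaSeq_nonneg _ n) (Real.sqrt_nonneg _)))
  rw [mul_pow, Real.sq_sqrt hpos.le]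
  exact sq_tprod_norm_inv_le hz hμk hmom hn

lemma summable_mul_norm_pow_of_summable_norm_sub_one (hz : ∀ k, 1 ≤ ‖z k‖)
    (hblaschke : Summable fun k ↦ ‖z k‖ - 1) (hμk : ∀ k, 0 ≤ μk k) (hμs : Summable μk) (N : ℕ) :
    Summable fun k ↦ μk k * ‖z k‖ ^ N := by
  have hbdd (k : ι) : ‖z k‖ ≤ 1 + ∑' j, (‖z j‖ - 1) :=
    sub_le_iff_le_add'.1 (hblaschke.le_tsum k fun j _ ↦ sub_nonneg.2 (hz j))
  refine (hμs.mul_right ((1 + ∑' j, (‖z j‖ - 1)) ^ N)).of_nonneg_of_le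
    (fun k ↦ mul_nonneg (hμk k) (by positivity)) fun k ↦ ?_
  exact mul_le_mul_of_nonneg_left (pow_le_pow_left₀ (norm_nonneg _) (hbdd k) N) (hμk k)

end Estimates

theorem eta_liminf_general {ι : Type*} [Countable ι] (z : ι → ℂ) (hz : ∀ k, 1 < ‖z k‖)
    (μk : ι → ℝ) (hμk : ∀ k, 0 ≤ μk k) (hmom : ∀ N : ℕ, Summable fun k ↦ μk k * ‖z k‖ ^ N) :
    (∏' k, ‖z k‖⁻¹) ≤ liminf (etaSeq (circleWithMasses z μk)) atTop := by
  set β := ∏' k, ‖z k‖⁻¹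
  set η := etaSeq (circleWithMasses z μk)
  have hlower : ∀ᶠ n in atTop, β / √(1 + residualEnergy z μk n) ≤ η n :=
    (eventually_gt_atTop 0).mono fun n hn ↦ tprod_norm_inv_div_sqrt_le_etaSeq hz hμk hmom hn
  have hupper : ∀ᶠ n in atTop, η n ≤ 1 := by
    filter_upwards [eventually_gt_atTop 0] with n hn
    exact etaSeq_le_one
      (ae_ne_zero_circleWithMasses fun k ↦ norm_pos_iff.1 (zero_lt_one.trans (hz k)))
      (coeffNormSq_le_laurentEnergy_circleWithMasses (fun k ↦ (hz k).le) hμk hmom n) hn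
  have hlim : Tendsto (fun n ↦ β / √(1 + residualEnergy z μk n)) atTop (𝓝 β) := by
    have hε := tendsto_residualEnergy hz hμk (by simpa using hmom 0)
    simpa [Pi.div_def] using (tendsto_const_nhds (x := β)).div (hε.const_add 1).sqrt (by simp)
  calc β = liminf (fun n ↦ β / √(1 + residualEnergy z μk n)) atTop := hlim.liminf_eq.symm
    _ ≤ liminf η atTop := liminf_le_liminf hlower hlim.isBoundedUnder_ge
        (isBoundedUnder_of_eventually_le hupper).isCoboundedUnder_ge

/-- Lower estimate for `η_n` in the case of weight `w ≡ 1`: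
`liminf η_n ≥ B(0) = ∏ |z_k|⁻¹`. -/
theorem eta_liminf (z : ℕ → ℂ) (hz : ∀ k, 1 < ‖z k‖)
    (hblaschke : Summable (fun k => ‖z k‖ - 1))
    (μk : ℕ → ℝ) (hμk : ∀ k, 0 < μk k) (hμs : Summable μk) :
    (∏' k, ‖z k‖⁻¹) ≤
      liminf
        (etaSeq (haarCircle +
          Measure.sum (fun k => ENNReal.ofReal (μk k) • Measure.dirac (z k))))
        atTop :=
  eta_liminf_general z hz μk (fun k ↦ (hμk k).le) <|
    summable_mul_norm_pow_of_summable_norm_sub_one (fun k ↦ (hz k).le) hblaschke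
      (fun k ↦ (hμk k).le) hμs
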